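/- Suppose the regression rank score process â(·) is piecewise linear on [0,1] and α ∈ (0,1) is a continuity point of the regression quantile trajectory β̂*_n(·) at which â(·) is differentiable. Then the averaged regression α-quantile satisfies the identity B̄_n(α) = (1/n) Σ_{i=1}^n x_i*ᵀ β̂*_n(α) = −(1/n) Σ_{i=1}^n Y_i â′_i(α), where â′_i(α) = (d/dα) â_i(α). -/

import Mathlib

/-- The quantile check loss `ρ_α(z) = α z⁺ + (1-α) z⁻`. -/
noncomputable def checkLoss (α z : ℝ) : ℝ := α * max z 0 + (1 - α) * max (-z) 0

/-- `b` is a regression α-quantile for responses `Y` and design `X`: a minimizer of the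
check-loss criterion. -/
def IsRegQuantile {n p : ℕ} (X : Matrix (Fin n) (Fin (p + 1)) ℝ) (Y : Fin n → ℝ)
    (α : ℝ) (b : Fin (p + 1) → ℝ) : Prop :=
  ∀ c : Fin (p + 1) → ℝ,
    ∑ i : Fin n, checkLoss α (Y i - ∑ j : Fin (p + 1), X i j * b j) ≤
      ∑ i : Fin n, checkLoss α (Y i - ∑ j : Fin (p + 1), X i j * c j)

/-- `g` is piecewise linear on `[0,1]`: there is a finite partition
`0 = t 0 < t 1 < … < t m = 1` of `[0,1]` on each piece of which `g` is affine. -/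
def PiecewiseLinearOn01 (g : ℝ → ℝ) : Prop :=
  ∃ (m : ℕ) (t : Fin (m + 1) → ℝ), StrictMono t ∧ t 0 = 0 ∧ t (Fin.last m) = 1 ∧
    ∀ k : Fin m, ∃ c d : ℝ, ∀ u ∈ Set.Icc (t k.castSucc) (t k.succ), g u = c * u + d

/-!
Up to a constant, the check-loss criterion is the hinge objective `b ↦ ∑ᵢ (Yᵢ - (Xb)ᵢ)⁺ + c ⬝ b`
with `c = (1 - α) Xᵀ1`, whose minimization is the linear programming dual of maximizing `Y ⬝ a`
over `a ∈ [0,1]ⁿ` with `Xᵀa = c`. Strong duality holds because a hyperplane separating `c` from the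
compact convex set of all `Xᵀa`, where `aᵢ` is a subgradient of the positive part at the residual
`(Y - Xb)ᵢ`, would provide a direction of descent at the minimizer `b`.

Now fix a minimizer `b` at `α` and let the level `s` vary. By weak duality `Y ⬝ a(s)` is at most the
hinge objective at `b` with `c = c(s)`, which is affine in `c(s)`, and by strong duality equality
holds at `s = α`. Both sides therefore have the same derivative at `α`, that is,
`Y ⬝ a'(α) = c'(α) ⬝ b = -1ᵀXb`.
-/

open Filter Matrix Set Topology

lemma checkLoss_eq_posPart_sub (α z : ℝ) : checkLoss α z = z⁺ - (1 - α) * z := by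
  change α * z⁺ + (1 - α) * z⁻ = z⁺ - (1 - α) * z
  linear_combination -(1 - α) * posPart_sub_negPart z

/-- The subdifferential at `r` of the positive part `z ↦ z⁺`. A slope `a` belongs to it when
`0 ≤ a ≤ 1` and the supporting line `z ↦ a * z` meets the graph at `r`; this is also the
complementary slackness condition between a rank score `a` and a residual `r`. -/
def posPartSubdifferential (r : ℝ) : Set ℝ := {a ∈ Icc 0 1 | a * r = r⁺}

lemma convex_posPartSubdifferential (r : ℝ) : Convex ℝ (posPartSubdifferential r) :=
  (convex_Icc 0 1).inter
    (convex_hyperplane (f := fun a : ℝ => a * r) (LinearMap.mulRight ℝ r).isLinear r⁺)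

lemma isCompact_posPartSubdifferential (r : ℝ) : IsCompact (posPartSubdifferential r) :=
  isCompact_Icc.inter_right (isClosed_eq (by fun_prop) continuous_const)

lemma mul_le_posPart {a : ℝ} (ha : a ∈ Icc (0 : ℝ) 1) (r : ℝ) : a * r ≤ r⁺ :=
  calc a * r ≤ a * r⁺ := mul_le_mul_of_nonneg_left (le_posPart r) ha.1
    _ ≤ r⁺ := mul_le_of_le_one_left (posPart_nonneg r) ha.2

lemma exists_mem_posPartSubdifferential_eventually_eq (r w : ℝ) :
    ∃ a ∈ posPartSubdifferential r, ∀ᶠ t in 𝓝[>] 0, (r + t * w)⁺ = a * (r + t * w) := by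
  have hlim : Tendsto (fun t => r + t * w) (𝓝[>] 0) (𝓝 r) :=
    (Continuous.tendsto' (by fun_prop) 0 r (by simp)).mono_left nhdsWithin_le_nhds
  rcases lt_trichotomy r 0 with hr | rfl | hr
  · refine ⟨0, ⟨by simp, by simp [hr.le]⟩, ?_⟩
    filter_upwards [hlim.eventually_lt_const hr] with t ht
    simp [ht.le]
  · rcases le_total w 0 with hw | hw
    · refine ⟨0, ⟨by simp, by simp⟩, ?_⟩
      filter_upwards [self_mem_nhdsWithin] with t (ht : 0 < t)
      simp [mul_nonpos_of_nonneg_of_nonpos ht.le hw]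
    · refine ⟨1, ⟨by simp, by simp⟩, ?_⟩
      filter_upwards [self_mem_nhdsWithin] with t (ht : 0 < t)
      simp [mul_nonneg ht.le hw]
  · refine ⟨1, ⟨by simp, by simp [hr.le]⟩, ?_⟩
    filter_upwards [hlim.eventually_const_lt hr] with t ht
    simp [ht.le]

lemma exists_forall_dotProduct_lt_of_notMem {κ : Type*} [Fintype κ] {K : Set (κ → ℝ)}
    (hconv : Convex ℝ K) (hclosed : IsClosed K) {c : κ → ℝ} (hc : c ∉ K) :
    ∃ v : κ → ℝ, ∀ x ∈ K, v ⬝ᵥ x < v ⬝ᵥ c := by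
  classical
  obtain ⟨f, u, hK, hu⟩ := geometric_hahn_banach_closed_point hconv hclosed hc
  obtain ⟨v, hv⟩ := (dotProductEquiv ℝ κ).surjective f.toLinearMap
  have hf (x : κ → ℝ) : v ⬝ᵥ x = f x := LinearMap.congr_fun hv x
  exact ⟨v, fun x hx => by simpa only [hf] using (hK x hx).trans hu⟩

section Duality

variable {ι κ : Type*} [Fintype ι] {X : Matrix ι κ ℝ} {Y : ι → ℝ}

/-- The weights `a ∈ [0,1]ⁿ` with `Xᵀa = c`. Regression rank scores at `α` maximize `Y ⬝ a` over
this set for `c = (1 - α) Xᵀ1`. -/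
def dualFeasible (X : Matrix ι κ ℝ) (c : κ → ℝ) : Set (ι → ℝ) :=
  {a | (∀ i, a i ∈ Icc (0 : ℝ) 1) ∧ Xᵀ *ᵥ a = c}

lemma mem_dualFeasible_one_sub_smul_iff {s : ℝ} {a : ι → ℝ} :
    a ∈ dualFeasible X ((1 - s) • (Xᵀ *ᵥ 1)) ↔
      (∀ i, a i ∈ Icc (0 : ℝ) 1) ∧ ∀ j, ∑ i, X i j * a i = (1 - s) * ∑ i, X i j := by
  simp [dualFeasible, funext_iff, mulVec, dotProduct]

variable [Fintype κ]

/-- The objective `∑ᵢ (Yᵢ - (Xb)ᵢ)⁺ + c ⬝ b` of the linear program dual to maximizing `Y ⬝ a` over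
`dualFeasible X c`. The check-loss criterion is, up to a constant, the case `c = (1 - α) Xᵀ1`. -/
def hingeObjective (X : Matrix ι κ ℝ) (Y : ι → ℝ) (c b : κ → ℝ) : ℝ :=
  ∑ i, ((Y - X *ᵥ b) i)⁺ + c ⬝ᵥ b

lemma transpose_mulVec_one_dotProduct (X : Matrix ι κ ℝ) (b : κ → ℝ) :
    (Xᵀ *ᵥ 1) ⬝ᵥ b = ∑ i, (X *ᵥ b) i := by
  rw [dotProduct_comm, dotProduct_transpose_mulVec, one_dotProduct]

lemma sum_checkLoss_eq_hingeObjective_sub (X : Matrix ι κ ℝ) (Y : ι → ℝ) (α : ℝ) (b : κ → ℝ) :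
    ∑ i, checkLoss α ((Y - X *ᵥ b) i) =
      hingeObjective X Y ((1 - α) • (Xᵀ *ᵥ 1)) b - (1 - α) * ∑ i, Y i := by
  simp only [checkLoss_eq_posPart_sub, hingeObjective, smul_dotProduct,
    transpose_mulVec_one_dotProduct, smul_eq_mul, Finset.sum_sub_distrib, ← Finset.mul_sum,
    Pi.sub_apply]
  ring

lemma dotProduct_eq_dotProduct_residual_add {a : ι → ℝ} {c : κ → ℝ} (ha : Xᵀ *ᵥ a = c)
    (b : κ → ℝ) : Y ⬝ᵥ a = a ⬝ᵥ (Y - X *ᵥ b) + c ⬝ᵥ b := by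
  rw [← ha, dotProduct_comm _ b, dotProduct_transpose_mulVec, dotProduct_sub, sub_add_cancel,
    dotProduct_comm]

lemma dotProduct_le_hingeObjective {a : ι → ℝ} {c : κ → ℝ} (ha : a ∈ dualFeasible X c)
    (b : κ → ℝ) : Y ⬝ᵥ a ≤ hingeObjective X Y c b := by
  rw [dotProduct_eq_dotProduct_residual_add ha.2 b]
  exact add_le_add_left (Finset.sum_le_sum fun i _ => mul_le_posPart (ha.1 i) _) _

lemma exists_hingeObjective_sub_smul_eq (X : Matrix ι κ ℝ) (Y : ι → ℝ) (c b v : κ → ℝ) :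
    ∃ a : ι → ℝ, (∀ i, a i ∈ posPartSubdifferential ((Y - X *ᵥ b) i)) ∧ ∃ t > 0,
      hingeObjective X Y c (b - t • v) =
        hingeObjective X Y c b + t * (v ⬝ᵥ Xᵀ *ᵥ a - v ⬝ᵥ c) := by
  choose a ha heq using fun i =>
    exists_mem_posPartSubdifferential_eventually_eq ((Y - X *ᵥ b) i) ((X *ᵥ v) i)
  obtain ⟨t, hpos, ht⟩ := ((eventually_all.2 heq).and self_mem_nhdsWithin).exists
  refine ⟨a, ha, t, ht, ?_⟩
  have hresidual (i : ι) :
      (Y - X *ᵥ (b - t • v)) i = (Y - X *ᵥ b) i + t * (X *ᵥ v) i := by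
    simp only [mulVec_sub, mulVec_smul, Pi.sub_apply, Pi.smul_apply, smul_eq_mul]
    ring
  have hlinear : ∑ i, ((Y - X *ᵥ (b - t • v)) i)⁺ =
      ∑ i, ((Y - X *ᵥ b) i)⁺ + t * (a ⬝ᵥ X *ᵥ v) := by
    simp only [hresidual, hpos, mul_add, Finset.sum_add_distrib, (ha _).2, dotProduct,
      Finset.mul_sum, mul_left_comm]
  rw [hingeObjective, hingeObjective, hlinear, dotProduct_sub, dotProduct_smul, smul_eq_mul,
    dotProduct_transpose_mulVec, dotProduct_comm v c]
  ring

lemma exists_transpose_mulVec_eq_of_isMinOn {c b : κ → ℝ}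
    (hb : IsMinOn (hingeObjective X Y c) univ b) :
    ∃ a : ι → ℝ, (∀ i, a i ∈ posPartSubdifferential ((Y - X *ᵥ b) i)) ∧ Xᵀ *ᵥ a = c := by
  set A : Set (ι → ℝ) := univ.pi fun i => posPartSubdifferential ((Y - X *ᵥ b) i)
  have hconv : Convex ℝ (Xᵀ.mulVecLin '' A) :=
    (convex_pi fun i _ => convex_posPartSubdifferential _).linear_image _
  have hclosed : IsClosed (Xᵀ.mulVecLin '' A) :=
    ((isCompact_univ_pi fun i => isCompact_posPartSubdifferential _).image
      Xᵀ.mulVecLin.continuous_of_finiteDimensional).isClosed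
  suffices hc : c ∈ Xᵀ.mulVecLin '' A by
    obtain ⟨a, ha, hac⟩ := hc
    exact ⟨a, fun i => ha i trivial, hac⟩
  by_contra hc
  obtain ⟨v, hv⟩ := exists_forall_dotProduct_lt_of_notMem hconv hclosed hc
  obtain ⟨a, ha, t, ht, hdescent⟩ := exists_hingeObjective_sub_smul_eq X Y c b v
  have hslope : v ⬝ᵥ Xᵀ *ᵥ a < v ⬝ᵥ c := hv _ ⟨a, fun i _ => ha i, rfl⟩
  have hmin := isMinOn_univ_iff.1 hb (b - t • v)
  have hneg := mul_neg_of_pos_of_neg ht (sub_neg.2 hslope)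
  linarith

lemma exists_mem_dualFeasible_dotProduct_eq {c b : κ → ℝ}
    (hb : IsMinOn (hingeObjective X Y c) univ b) :
    ∃ a ∈ dualFeasible X c, Y ⬝ᵥ a = hingeObjective X Y c b := by
  obtain ⟨a, ha, hac⟩ := exists_transpose_mulVec_eq_of_isMinOn hb
  refine ⟨a, ⟨fun i => (ha i).1, hac⟩, ?_⟩
  rw [dotProduct_eq_dotProduct_residual_add hac b, hingeObjective, dotProduct,
    Finset.sum_congr rfl fun i _ => (ha i).2]

lemma eq_dotProduct_of_hasDerivAt_dual {α D : ℝ} {a : ℝ → ι → ℝ} {c : ℝ → κ → ℝ}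
    {c' b : κ → ℝ} (hfeas : ∀ᶠ s in 𝓝 α, a s ∈ dualFeasible X (c s))
    (hopt : IsMaxOn (Y ⬝ᵥ ·) (dualFeasible X (c α)) (a α))
    (hb : IsMinOn (hingeObjective X Y (c α)) univ b)
    (hc : HasDerivAt c c' α) (hD : HasDerivAt (fun s => Y ⬝ᵥ a s) D α) : D = c' ⬝ᵥ b := by
  have hattained : hingeObjective X Y (c α) b ≤ Y ⬝ᵥ a α := by
    obtain ⟨a₀, ha₀, heq⟩ := exists_mem_dualFeasible_dotProduct_eq hb
    exact heq ▸ hopt ha₀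
  have hmax : IsLocalMax (fun s => Y ⬝ᵥ a s - hingeObjective X Y (c s) b) α := by
    filter_upwards [hfeas] with s hs
    exact (sub_nonpos.2 (dotProduct_le_hingeObjective hs b)).trans (sub_nonneg.2 hattained)
  have hbound : HasDerivAt (fun s => hingeObjective X Y (c s) b) (c' ⬝ᵥ b) α :=
    (HasDerivAt.fun_sum fun j _ => (hasDerivAt_pi.1 hc j).mul_const (b j)).const_add _
  exact sub_eq_zero.1 (hmax.hasDerivAt_eq_zero (hD.sub hbound))

theorem averaged_quantile_dual_identity_general {α : ℝ} {a : ℝ → ι → ℝ} {d : ι → ℝ} {b : κ → ℝ}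
    (hfeas : ∀ᶠ s in 𝓝 α, a s ∈ dualFeasible X ((1 - s) • (Xᵀ *ᵥ 1)))
    (hopt : IsMaxOn (Y ⬝ᵥ ·) (dualFeasible X ((1 - α) • (Xᵀ *ᵥ 1))) (a α))
    (hb : IsMinOn (fun v => ∑ i, checkLoss α ((Y - X *ᵥ v) i)) univ b)
    (hd : HasDerivAt a d α) : ∑ i, (X *ᵥ b) i = -(Y ⬝ᵥ d) := by
  have hhinge : IsMinOn (hingeObjective X Y ((1 - α) • (Xᵀ *ᵥ 1))) univ b := by
    simpa only [isMinOn_univ_iff, sum_checkLoss_eq_hingeObjective_sub, sub_le_sub_iff_right]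
      using hb
  have hc : HasDerivAt (fun s : ℝ => (1 - s) • (Xᵀ *ᵥ 1)) ((-1 : ℝ) • (Xᵀ *ᵥ 1)) α :=
    ((hasDerivAt_id α).const_sub 1).smul_const _
  have hD : HasDerivAt (fun s => Y ⬝ᵥ a s) (Y ⬝ᵥ d) α :=
    HasDerivAt.fun_sum fun i _ => (hasDerivAt_pi.1 hd i).const_mul (Y i)
  rw [eq_dotProduct_of_hasDerivAt_dual hfeas hopt hhinge hc hD, neg_one_smul, neg_dotProduct,
    neg_neg, transpose_mulVec_one_dotProduct]

end Duality

/-- if the regression rank score process `â(·)` (optimal solution of the dual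
program at every `α ∈ [0,1]`) is piecewise linear on `[0,1]`, and `α ∈ (0,1)` is a
continuity point of the regression quantile trajectory `β̂*(·)` at which `â(·)` is
differentiable with derivative `â′(α)`, then the averaged regression α-quantile satisfies
`B̄_n(α) = (1/n) ∑ i x_i*ᵀ β̂*(α) = -(1/n) ∑ i Y_i â′_i(α)`. -/
theorem averaged_quantile_dual_identity {n p : ℕ} (hn : 0 < n)
    (X : Matrix (Fin n) (Fin (p + 1)) ℝ)
    (hones : ∀ i : Fin n, X i 0 = 1)
    (Y : Fin n → ℝ)
    (a : ℝ → Fin n → ℝ)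
    (hfeas : ∀ α ∈ Set.Icc (0 : ℝ) 1, (∀ i, a α i ∈ Set.Icc (0 : ℝ) 1) ∧
      ∀ j : Fin (p + 1), ∑ i : Fin n, X i j * a α i = (1 - α) * ∑ i : Fin n, X i j)
    (hopt : ∀ α ∈ Set.Icc (0 : ℝ) 1, ∀ a' : Fin n → ℝ,
      ((∀ i, a' i ∈ Set.Icc (0 : ℝ) 1) ∧
        ∀ j : Fin (p + 1), ∑ i : Fin n, X i j * a' i = (1 - α) * ∑ i : Fin n, X i j) →
      ∑ i : Fin n, Y i * a' i ≤ ∑ i : Fin n, Y i * a α i)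
    (hpl : ∀ i : Fin n, PiecewiseLinearOn01 fun s => a s i)
    (bhat : ℝ → Fin (p + 1) → ℝ)
    (hbhat : ∀ α ∈ Set.Ioo (0 : ℝ) 1, IsRegQuantile X Y α (bhat α))
    (α : ℝ) (hα : α ∈ Set.Ioo (0 : ℝ) 1)
    (hcont : ContinuousAt bhat α)
    (d : Fin n → ℝ) (hd : ∀ i, HasDerivAt (fun s => a s i) (d i) α) :
    (1 / (n : ℝ)) * ∑ i : Fin n, ∑ j : Fin (p + 1), X i j * bhat α j =
      -(1 / (n : ℝ)) * ∑ i : Fin n, Y i * d i := by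
  rw [neg_mul_comm]
  exact congrArg _ <| averaged_quantile_dual_identity_general (α := α) (a := a)
    (mem_of_superset (Icc_mem_nhds hα.1 hα.2) fun s hs =>
      mem_dualFeasible_one_sub_smul_iff.2 (hfeas s hs))
    (fun a' ha' => hopt α (Ioo_subset_Icc_self hα) a' (mem_dualFeasible_one_sub_smul_iff.1 ha'))
    (isMinOn_univ_iff.2 (hbhat α hα)) (hasDerivAt_pi.2 hd)
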